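/- In the polynomial ring ℂ[u_1,…,u_4, v_1, v_2, v_3, v_4, s_1,…,s_4, a_1,…,a_4], let K be the ideal generated by the six polynomials u_1·u_3 − a_2·s_1·s_2·u_2 − a_4·s_3·s_4·u_4, u_2·u_4 − a_1·s_1·s_4·u_1 − a_3·s_2·s_3·u_3, s_1·v_1 − u_1·u_2 + a_3·a_4·s_2·s_3²·s_4, s_2·v_2 − u_2·u_3 + a_1·a_4·s_1·s_3·s_4², s_3·v_3 − u_3·u_4 + a_1·a_2·s_1²·s_2·s_4, and s_4·v_4 − u_1·u_4 + a_2·a_3·s_1·s_2²·s_3. Then s_1·s_3·(v_1·v_3 − a_1·a_4·s_4³·v_4 − a_2·a_3·s_2³·v_2 − 3·a_1·a_2·a_3·a_4·s_1·s_2²·s_3·s_4²) lies in K. -/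

import Mathlib

/-!
Parallel unprojection of the key 10-fold `W ⊆ 𝔸¹⁶`: the long equation
`v₁v₃ = a₁a₄s₄³v₄ + a₂a₃s₂³v₂ + 3a₁a₂a₃a₄s₁s₂²s₃s₄²` holds after
multiplication by `s₁s₃` modulo the complete intersection and the four linear
unprojection equations.
-/

open MvPolynomial

noncomputable section

namespace KeyW

/-- The polynomial ring `ℂ[u₁,…,u₄, v₁,…,v₄, s₁,…,s₄, a₁,…,a₄]`;
variables `0,…,3 = u₁,…,u₄`, `4,…,7 = v₁,…,v₄`, `8,…,11 = s₁,…,s₄`,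
`12,…,15 = a₁,…,a₄`. -/
abbrev R : Type := MvPolynomial (Fin 16) ℂ

def u1 : R := X 0
def u2 : R := X 1
def u3 : R := X 2
def u4 : R := X 3
def v1 : R := X 4
def v2 : R := X 5
def v3 : R := X 6
def v4 : R := X 7
def s1 : R := X 8
def s2 : R := X 9
def s3 : R := X 10
def s4 : R := X 11
def a1 : R := X 12
def a2 : R := X 13
def a3 : R := X 14
def a4 : R := X 15

/-- The ideal generated by the two complete intersection equations and the
four linear unprojection equations for `v₁, v₂, v₃, v₄`. -/
def K : Ideal R := Ideal.span
  { u1 * u3 - a2 * s1 * s2 * u2 - a4 * s3 * s4 * u4,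
    u2 * u4 - a1 * s1 * s4 * u1 - a3 * s2 * s3 * u3,
    s1 * v1 - u1 * u2 + a3 * a4 * s2 * s3 ^ 2 * s4,
    s2 * v2 - u2 * u3 + a1 * a4 * s1 * s3 * s4 ^ 2,
    s3 * v3 - u3 * u4 + a1 * a2 * s1 ^ 2 * s2 * s4,
    s4 * v4 - u1 * u4 + a2 * a3 * s1 * s2 ^ 2 * s3 }

end KeyW

open KeyW in
/-- `s₁s₃ · (v₁v₃ - a₁a₄s₄³v₄ - a₂a₃s₂³v₂ - 3a₁a₂a₃a₄s₁s₂²s₃s₄²)` lies in `K`. -/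
theorem long_equation_mem :
    s1 * s3 * (v1 * v3 - a1 * a4 * s4 ^ 3 * v4 - a2 * a3 * s2 ^ 3 * v2
      - 3 * a1 * a2 * a3 * a4 * s1 * s2 ^ 2 * s3 * s4 ^ 2) ∈ K := by
  have mem {x : R} (hx : x ∈ ({
      u1 * u3 - a2 * s1 * s2 * u2 - a4 * s3 * s4 * u4,
      u2 * u4 - a1 * s1 * s4 * u1 - a3 * s2 * s3 * u3,
      s1 * v1 - u1 * u2 + a3 * a4 * s2 * s3 ^ 2 * s4,
      s2 * v2 - u2 * u3 + a1 * a4 * s1 * s3 * s4 ^ 2,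
      s3 * v3 - u3 * u4 + a1 * a2 * s1 ^ 2 * s2 * s4,
      s4 * v4 - u1 * u4 + a2 * a3 * s1 * s2 ^ 2 * s3 } : Set R)) (c : R) : c * x ∈ K :=
    K.mul_mem_left c (Ideal.subset_span hx)
  -- Modulo `K`, the product of `s₁v₁ = u₁u₂ - A` and `s₃v₃ = u₃u₄ - B` contains `u₁u₃ · u₂u₄`.
  -- Expanding the latter by the two complete intersection equations cancels `A u₃u₄ + B u₁u₂`
  -- and leaves multiples of `u₂u₃` and `u₁u₄`, which are rewritten in terms of `s₂v₂` and `s₄v₄`.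
  -- Those two rewritings and `AB` each contribute `a₁a₂a₃a₄(s₁s₂s₃s₄)²`, whence the coefficient 3.
  -- The multipliers below record these substitutions.
  have h1 := mem (x := u1 * u3 - a2 * s1 * s2 * u2 - a4 * s3 * s4 * u4) (by simp) (u2 * u4)
  have h2 := mem (x := u2 * u4 - a1 * s1 * s4 * u1 - a3 * s2 * s3 * u3) (by simp)
    (a2 * s1 * s2 * u2 + a4 * s3 * s4 * u4)
  have h3 := mem (x := s1 * v1 - u1 * u2 + a3 * a4 * s2 * s3 ^ 2 * s4) (by simp) (s3 * v3)
  have h4 := mem (x := s2 * v2 - u2 * u3 + a1 * a4 * s1 * s3 * s4 ^ 2) (by simp)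
    (-(a2 * a3 * s1 * s2 ^ 2 * s3))
  have h5 := mem (x := s3 * v3 - u3 * u4 + a1 * a2 * s1 ^ 2 * s2 * s4) (by simp)
    (u1 * u2 - a3 * a4 * s2 * s3 ^ 2 * s4)
  have h6 := mem (x := s4 * v4 - u1 * u4 + a2 * a3 * s1 * s2 ^ 2 * s3) (by simp)
    (-(a1 * a4 * s1 * s3 * s4 ^ 2))
  convert K.add_mem (K.add_mem (K.add_mem h1 h2) (K.add_mem h3 h4)) (K.add_mem h5 h6) using 1
  ring
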